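/- arXiv:2012.07897 — 4 statements merged into one kernel-verified Lean document; each statement's English description precedes it below -/
import Mathlib

section
/- The variety of pairs of commuting upper-triangular $3\times 3$ matrices, i.e. the subscheme of affine 12-space cut out by the three commutation equations $X_{12}(Y_{11}-Y_{22}) = Y_{12}(X_{11}-X_{22})$, $X_{23}(Y_{22}-Y_{33}) = Y_{23}(X_{22}-X_{33})$, $X_{13}(Y_{11}-Y_{33}) - Y_{13}(X_{11}-X_{33}) = X_{12}Y_{23} - X_{23}Y_{12}$, has dimension 9. -/
open MvPolynomial

/-- A root of a monic quartic with integral coefficients is integral. -/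
lemma quartic_integral {S A : Type*} [CommRing S] [CommRing A] [Algebra S A] (r c3 c2 c1 c0 : A)
    (h3 : IsIntegral S c3) (h2 : IsIntegral S c2) (h1 : IsIntegral S c1) (h0 : IsIntegral S c0)
    (h : r ^ 4 + c3 * r ^ 3 + c2 * r ^ 2 + c1 * r + c0 = 0) : IsIntegral S r := by
  nontriviality A
  have : IsIntegral (integralClosure S A) r := by
    refine ⟨Polynomial.X ^ 4 + Polynomial.C (⟨c3, h3⟩ : integralClosure S A) * Polynomial.X ^ 3
      + Polynomial.C (⟨c2, h2⟩ : integralClosure S A) * Polynomial.X ^ 2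
      + Polynomial.C (⟨c1, h1⟩ : integralClosure S A) * Polynomial.X
      + Polynomial.C (⟨c0, h0⟩ : integralClosure S A), ?_, ?_⟩
    · monicity!
    · simp only [Polynomial.eval₂_add, Polynomial.eval₂_mul, Polynomial.eval₂_pow,
        Polynomial.eval₂_X, Polynomial.eval₂_C]
      exact h
  exact isIntegral_trans r this

/-- Integral extensions do not increase dimension beyond the base. -/
lemma dim_le_of_integral {S A : Type*} [CommRing S] [CommRing A] [Algebra S A]
    [Algebra.IsIntegral S A] : ringKrullDim A ≤ ringKrullDim S := by
  refine Order.krullDim_le_of_strictMono (PrimeSpectrum.comap (algebraMap S A)) ?_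
  intro I J hIJ
  exact Ideal.IsIntegral.comap_lt_comap (I := I.asIdeal) (J := J.asIdeal) hIJ

lemma height_maximal {k : Type*} [Field k] (n : ℕ) (m : Ideal (MvPolynomial (Fin n) k))
    [hm : m.IsMaximal] : (n : ℕ∞) ≤ m.height := by
  induction n with
  | zero => simp
  | succ n ih =>
    let e := (finSuccEquiv k n).toRingEquiv
    have hP : (m.map e).IsMaximal := Ideal.map_isMaximal_of_equiv e
    have hh := e.height_map m
    generalize m.map e = P at hP hh
    have hp : (P.comap Polynomial.C).IsMaximal :=
      Polynomial.isMaximal_comap_C_of_isJacobsonRing P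
    have := ih (P.comap Polynomial.C)
    have hL : P.LiesOver (P.comap Polynomial.C) := ⟨rfl⟩
    rw [← hh, Polynomial.height_eq_height_add_one (P.comap Polynomial.C) P]
    push_cast
    gcongr

lemma flag_lower {k : Type*} [Field k] (s : Set (MvPolynomial (Fin 12) k))
    (hs : ∀ f ∈ s, aeval (0 : Fin 12 → k) f = 0) (hc : s.encard ≤ 3) :
    9 ≤ ringKrullDim (MvPolynomial (Fin 12) k ⧸ Ideal.span s) := by
  let φ : MvPolynomial (Fin 12) k →ₐ[k] k := aeval (0 : Fin 12 → k)
  have hsurj : Function.Surjective φ := fun c => ⟨C c, by simp [φ]⟩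
  have hmax : (RingHom.ker φ).IsMaximal := RingHom.ker_isMaximal_of_surjective φ hsurj
  have h1 := Ideal.height_le_ringKrullDim_quotient_add_encard (p := RingHom.ker φ) s
    (fun f hf => hs f hf)
  have h2 : ((12 : ℕ) : ℕ∞) ≤ (RingHom.ker φ).height := height_maximal 12 _
  generalize ringKrullDim (MvPolynomial (Fin 12) k ⧸ Ideal.span s) = d at *
  have h3 : ((12 : ℕ∞) : WithBot ℕ∞) ≤ d + (3 : ℕ∞) := by
    refine le_trans (WithBot.coe_le_coe.2 h2) (h1.trans ?_)
    gcongr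
    exact WithBot.coe_le_coe.2 hc
  induction d with
  | bot => simp at h3
  | coe d =>
    norm_cast at h3 ⊢
    induction d with
    | top => simp
    | coe d =>
      have h4 : ((12 : ℕ) : ℕ∞) ≤ ((d + 3 : ℕ) : ℕ∞) := by exact_mod_cast h3
      have h5 : 9 ≤ d := by have := Nat.cast_le.1 h4; omega
      have h6 : ((9 : ℕ) : ℕ∞) ≤ ((d : ℕ) : ℕ∞) := Nat.cast_le.2 h5
      exact WithBot.coe_le_coe.2 h6

lemma flag_upper {k A : Type*} [Field k] [CommRing A] [Algebra k A] (x : Fin 12 → A)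
    (hx : Function.Surjective (aeval x : MvPolynomial (Fin 12) k →ₐ[k] A))
    (e1 : x 1 * (x 6 - x 9) - x 7 * (x 0 - x 3) = 0)
    (e2 : x 4 * (x 9 - x 11) - x 10 * (x 3 - x 5) = 0)
    (e3 : x 2 * (x 6 - x 11) - x 8 * (x 0 - x 5) - (x 1 * x 10 - x 4 * x 7) = 0) :
    ringKrullDim A ≤ 9 := by
  let l : Fin 9 → A := ![x 6 - x 9 - x 1, x 7, x 9 - x 11 - x 4, x 10, x 3 - x 5, x 2,
    x 8 + (x 0 - x 3), x 5, x 11]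
  let φ : MvPolynomial (Fin 9) k →ₐ[k] A := aeval l
  let _ : Algebra (MvPolynomial (Fin 9) k) A := φ.toRingHom.toAlgebra
  have hl : ∀ i, l i ∈ integralClosure (MvPolynomial (Fin 9) k) A := fun i => by
    have : l i = algebraMap (MvPolynomial (Fin 9) k) A (X i) := (aeval_X l i).symm
    rw [this]
    exact isIntegral_algebraMap
  have h0 : x 6 - x 9 - x 1 ∈ integralClosure (MvPolynomial (Fin 9) k) A := hl 0
  have h1 : x 7 ∈ integralClosure (MvPolynomial (Fin 9) k) A := hl 1
  have h2 : x 9 - x 11 - x 4 ∈ integralClosure (MvPolynomial (Fin 9) k) A := hl 2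
  have h3 : x 10 ∈ integralClosure (MvPolynomial (Fin 9) k) A := hl 3
  have h4 : x 3 - x 5 ∈ integralClosure (MvPolynomial (Fin 9) k) A := hl 4
  have h5 : x 2 ∈ integralClosure (MvPolynomial (Fin 9) k) A := hl 5
  have h6 : x 8 + (x 0 - x 3) ∈ integralClosure (MvPolynomial (Fin 9) k) A := hl 6
  have h7 : x 5 ∈ integralClosure (MvPolynomial (Fin 9) k) A := hl 7
  have h8 : x 11 ∈ integralClosure (MvPolynomial (Fin 9) k) A := hl 8
  set B := integralClosure (MvPolynomial (Fin 9) k) A with hB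
  have quart : ∀ r c3 c2 c1 c0 : A, c3 ∈ B → c2 ∈ B → c1 ∈ B → c0 ∈ B →
      r ^ 4 + c3 * r ^ 3 + c2 * r ^ 2 + c1 * r + c0 = 0 → r ∈ B :=
    fun r c3 c2 c1 c0 a b c d e => quartic_integral r c3 c2 c1 c0 a b c d e
  have quad : ∀ r c d : A, c ∈ B → d ∈ B → r ^ 2 + c * r + d = 0 → r ∈ B := by
    intro r c d hc hd h
    exact quart r c d 0 0 hc hd B.zero_mem B.zero_mem (by linear_combination r ^ 2 * h)
  have two : (2 : A) ∈ B := ofNat_mem B 2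
  -- the second equation
  have hq : x 4 ∈ B := quad (x 4) (x 9 - x 11 - x 4) (-(x 10 * (x 3 - x 5))) h2
    (B.neg_mem (B.mul_mem h3 h4)) (by linear_combination e2)
  -- the first and third equations
  obtain ⟨c, hc⟩ : ∃ c, c = (x 3 - x 5) - (x 8 + (x 0 - x 3)) := ⟨_, rfl⟩
  obtain ⟨d, hd⟩ : ∃ d, d = x 2 - x 10 := ⟨_, rfl⟩
  obtain ⟨h, hh⟩ : ∃ h, h = -((x 8 + (x 0 - x 3)) * (x 3 - x 5))
      + x 2 * ((x 6 - x 9 - x 1) + (x 9 - x 11 - x 4)) + x 4 * (x 2 + x 7) := ⟨_, rfl⟩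
  have hcB : c ∈ B := hc ▸ B.sub_mem h4 h6
  have hdB : d ∈ B := hd ▸ B.sub_mem h5 h3
  have hhB : h ∈ B := hh ▸ B.add_mem (B.add_mem (B.neg_mem (B.mul_mem h6 h4))
    (B.mul_mem h5 (B.add_mem h0 h2))) (B.mul_mem hq (B.add_mem h5 h1))
  obtain ⟨r, hr⟩ : ∃ r, r = x 0 - x 3 := ⟨_, rfl⟩
  obtain ⟨m, hm⟩ : ∃ m, m = x 6 - x 9 - x 1 := ⟨_, rfl⟩
  have hmB : m ∈ B := hm ▸ h0
  have E1 : x 1 ^ 2 + m * x 1 - x 7 * r = 0 := by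
    subst hm hr; linear_combination e1
  have E3 : r ^ 2 + c * r + h + d * x 1 = 0 := by
    subst hr hh hd hc; linear_combination e3
  have hrB : r ∈ B := by
    refine quart r (2 * c) (c ^ 2 + 2 * h - d * m) (2 * c * h - d * m * c - d ^ 2 * x 7)
      (h ^ 2 - d * m * h) ?_ ?_ ?_ ?_ ?_
    · exact B.mul_mem two hcB
    · exact B.sub_mem (B.add_mem (B.pow_mem hcB 2) (B.mul_mem two hhB)) (B.mul_mem hdB hmB)
    · exact B.sub_mem (B.sub_mem (B.mul_mem (B.mul_mem two hcB) hhB)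
        (B.mul_mem (B.mul_mem hdB hmB) hcB)) (B.mul_mem (B.pow_mem hdB 2) h1)
    · exact B.sub_mem (B.pow_mem hhB 2) (B.mul_mem (B.mul_mem hdB hmB) hhB)
    · linear_combination (r ^ 2 + c * r + h - d * x 1 - d * m) * E3 + d ^ 2 * E1
  have hp : x 1 ∈ B := quad (x 1) m (-(x 7 * r)) hmB (B.neg_mem (B.mul_mem h1 hrB))
    (by linear_combination E1)
  rw [hr] at hrB
  have g3 : x 3 ∈ B := by simpa using B.add_mem h4 h7
  have g0 : x 0 ∈ B := by simpa using B.add_mem hrB g3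
  have g8 : x 8 ∈ B := by simpa using B.sub_mem h6 hrB
  have g9 : x 9 ∈ B := by simpa using B.add_mem (B.add_mem h2 hq) h8
  have g6 : x 6 ∈ B := by simpa using B.add_mem (B.add_mem h0 hp) g9
  have hall : ∀ i, x i ∈ B := by
    intro i
    fin_cases i <;> assumption
  have : Algebra.IsIntegral (MvPolynomial (Fin 9) k) A := by
    refine ⟨fun a => ?_⟩
    change a ∈ B
    obtain ⟨f, rfl⟩ := hx a
    induction f using MvPolynomial.induction_on with
    | C c =>
      have : aeval x (C c : MvPolynomial (Fin 12) k)
          = algebraMap (MvPolynomial (Fin 9) k) A (C c) := by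
        change _ = φ (C c)
        simp [φ]
      rw [this]
      exact isIntegral_algebraMap
    | add p q hp hq => rw [map_add]; exact B.add_mem hp hq
    | mul_X p i hp => rw [map_mul, aeval_X]; exact B.mul_mem hp (hall i)
  refine (dim_le_of_integral (S := MvPolynomial (Fin 9) k)).trans ?_
  simp

/-- The variety of pairs of commuting upper-triangular `3×3` matrices has dimension 9.
Variables `0,…,5` are `X₁₁,X₁₂,X₁₃,X₂₂,X₂₃,X₃₃` and `6,…,11` are
`Y₁₁,Y₁₂,Y₁₃,Y₂₂,Y₂₃,Y₃₃`. -/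
theorem flag_xyz_dimension_nine {k : Type*} [Field k] [IsAlgClosed k] :
    ringKrullDim (MvPolynomial (Fin 12) k ⧸
      Ideal.span ({X 1 * (X 6 - X 9) - X 7 * (X 0 - X 3),
                   X 4 * (X 9 - X 11) - X 10 * (X 3 - X 5),
                   X 2 * (X 6 - X 11) - X 8 * (X 0 - X 5) - (X 1 * X 10 - X 4 * X 7)} :
        Set (MvPolynomial (Fin 12) k))) = 9 := by
  apply le_antisymm
  · refine flag_upper (k := k) (fun i => Ideal.Quotient.mk _ (X i)) ?_ ?_ ?_ ?_
    · intro a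
      obtain ⟨f, rfl⟩ := Ideal.Quotient.mk_surjective a
      refine ⟨f, ?_⟩
      have : (aeval fun i => Ideal.Quotient.mk _ (X i)) = Ideal.Quotient.mkₐ k
        (Ideal.span ({X 1 * (X 6 - X 9) - X 7 * (X 0 - X 3),
                   X 4 * (X 9 - X 11) - X 10 * (X 3 - X 5),
                   X 2 * (X 6 - X 11) - X 8 * (X 0 - X 5) - (X 1 * X 10 - X 4 * X 7)} :
        Set (MvPolynomial (Fin 12) k))) := by
        ext i
        simp
      exact DFunLike.congr_fun this f
    all_goals
      simp only [← map_mul, ← map_sub]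
      exact Ideal.Quotient.eq_zero_iff_mem.2 (Ideal.subset_span (by simp))
  · apply flag_lower
    · rintro f (rfl | rfl | rfl) <;> simp
    · refine (Set.encard_insert_le _ _).trans ?_
      have := Set.encard_insert_le {X 2 * (X 6 - X 11) - X 8 * (X 0 - X 5) -
        (X 1 * X 10 - X 4 * X 7)} (X 4 * (X 9 - X 11) - X 10 * (X 3 - X 5) :
          MvPolynomial (Fin 12) k)
      rw [Set.encard_singleton] at this
      calc _ ≤ ((1 : ℕ∞) + 1) + 1 := by gcongr
        _ = 3 := by norm_num
end

section
/- The ring $R = k[x_1,x_2,x_3,y_1,y_2,y_3]/(x_1y_2-x_2y_1,\; x_2y_3-x_3y_2,\; x_3y_1-x_1y_3)$ has Krull dimension 4. -/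
open MvPolynomial

/-- The Krull dimension does not go up along an integral ring map. -/
lemma ringKrullDim_le_of_integral_map {A B : Type*} [CommRing A] [CommRing B] (f : A →+* B)
    (hf : f.IsIntegral) : ringKrullDim B ≤ ringKrullDim A := by
  let _ : Algebra A B := f.toAlgebra
  have : Algebra.IsIntegral A B := ⟨hf⟩
  refine Order.krullDim_le_of_strictMono (PrimeSpectrum.comap f) ?_
  intro I J h
  exact Ideal.IsIntegral.comap_lt_comap (R := A) (A := B) (I := I.asIdeal) (J := J.asIdeal) h

lemma isIntegralElem_of_quartic {A B : Type*} [CommRing A] [Nontrivial A] [CommRing B] (f : A →+* B)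
    (z : B) (c3 c2 c1 : A) (h : z ^ 4 + f c3 * z ^ 3 + f c2 * z ^ 2 + f c1 * z = 0) :
    f.IsIntegralElem z := by
  refine ⟨Polynomial.X ^ 4 + Polynomial.C c3 * Polynomial.X ^ 3 +
    Polynomial.C c2 * Polynomial.X ^ 2 + Polynomial.C c1 * Polynomial.X, ?_, ?_⟩
  · monicity!
  · simpa [Polynomial.eval₂_add, Polynomial.eval₂_mul] using h

lemma minors_dim_le {k : Type*} [Field k] {B : Type*} [CommRing B]
    (g : MvPolynomial (Fin 6) k →+* B) (hg : Function.Surjective g)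
    (h1 : g (X 0) * g (X 4) = g (X 1) * g (X 3))
    (h2 : g (X 1) * g (X 5) = g (X 2) * g (X 4)) :
    ringKrullDim B ≤ 4 := by
  let f : MvPolynomial (Fin 4) k →+* B := eval₂Hom (g.comp C)
    ![g (X 0), g (X 5), g (X 1) - g (X 3), g (X 2) - g (X 4)]
  have f0 : f (X 0) = g (X 0) := by simp [f]
  have f1 : f (X 1) = g (X 5) := by simp [f]
  have f2 : f (X 2) = g (X 1) - g (X 3) := by simp [f]
  have f3 : f (X 3) = g (X 2) - g (X 4) := by simp [f]
  have fC : ∀ c, f (C c) = g (C c) := by intro c; simp [f]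
  have e1 : g (X 1) ^ 2 = f (X 2) * g (X 1) + f (X 0) * g (X 4) := by
    rw [f2, f0]; linear_combination -h1
  have e2 : g (X 4) ^ 2 = - f (X 3) * g (X 4) + f (X 1) * g (X 1) := by
    rw [f3, f1]; linear_combination -h2
  have i1 : f.IsIntegralElem (g (X 1)) := by
    refine isIntegralElem_of_quartic f _ (-2 * X 2) (X 2 ^ 2 + X 3 * X 0)
      (-(X 2 * X 3 * X 0) - X 0 ^ 2 * X 1) ?_
    simp only [map_add, map_sub, map_mul, map_neg, map_pow, map_ofNat]
    generalize f (X 0) = p at *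
    generalize f (X 1) = q at *
    generalize f (X 2) = u at *
    generalize f (X 3) = v at *
    linear_combination (g (X 1) ^ 2 - u * g (X 1) + p * g (X 4) + v * p) * e1 + p ^ 2 * e2
  have i4 : f.IsIntegralElem (g (X 4)) := by
    refine isIntegralElem_of_quartic f _ (2 * X 3) (X 3 ^ 2 - X 2 * X 1)
      (-(X 2 * X 3 * X 1) - X 0 * X 1 ^ 2) ?_
    simp only [map_add, map_sub, map_mul, map_neg, map_pow, map_ofNat]
    generalize f (X 0) = p at *
    generalize f (X 1) = q at *
    generalize f (X 2) = u at *
    generalize f (X 3) = v at *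
    linear_combination (g (X 4) ^ 2 + v * g (X 4) + q * g (X 1) - u * q) * e2 + q ^ 2 * e1
  have hX : ∀ i, f.IsIntegralElem (g (X i)) := by
    intro i
    fin_cases i
    · exact f0 ▸ f.isIntegralElem_map
    · exact i1
    · have : g (X 2) = f (X 3) + g (X 4) := by rw [f3]; ring
      exact this ▸ RingHom.IsIntegralElem.add f f.isIntegralElem_map i4
    · have : g (X 3) = g (X 1) - f (X 2) := by rw [f2]; ring
      exact this ▸ RingHom.IsIntegralElem.sub f i1 f.isIntegralElem_map
    · exact i4
    · exact f1 ▸ f.isIntegralElem_map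
  have hf : f.IsIntegral := by
    intro b
    obtain ⟨p, rfl⟩ := hg b
    induction p using MvPolynomial.induction_on with
    | C c => exact fC c ▸ f.isIntegralElem_map
    | add p q hp hq => rw [map_add]; exact RingHom.IsIntegralElem.add f hp hq
    | mul_X p i hp => rw [map_mul]; exact RingHom.IsIntegralElem.mul f hp (hX i)
  refine (ringKrullDim_le_of_integral_map f hf).trans ?_
  simp

lemma four_le_minors_dim {k : Type*} [Field k] :
    4 ≤ ringKrullDim (MvPolynomial (Fin 6) k ⧸
      Ideal.span ({X 0 * X 4 - X 1 * X 3,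
                   X 1 * X 5 - X 2 * X 4,
                   X 2 * X 3 - X 0 * X 5} : Set (MvPolynomial (Fin 6) k))) := by
  let φ : MvPolynomial (Fin 6) k →+* Polynomial (MvPolynomial (Fin 3) k) :=
    eval₂Hom (Polynomial.C.comp C)
      ![Polynomial.C (X 0), Polynomial.C (X 1), Polynomial.C (X 2),
        Polynomial.X * Polynomial.C (X 0), Polynomial.X * Polynomial.C (X 1),
        Polynomial.X * Polynomial.C (X 2)]
  have p0 : φ (X 0) = Polynomial.C (X 0) := by simp [φ]
  have p1 : φ (X 1) = Polynomial.C (X 1) := by simp [φ]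
  have p2 : φ (X 2) = Polynomial.C (X 2) := by simp [φ]
  have p3 : φ (X 3) = Polynomial.X * Polynomial.C (X 0) := by simp [φ]
  have p4 : φ (X 4) = Polynomial.X * Polynomial.C (X 1) := by simp [φ]
  have p5 : φ (X 5) = Polynomial.X * Polynomial.C (X 2) := by simp [φ]
  have pC : ∀ c, φ (C c) = Polynomial.C (C c) := by intro c; simp [φ]
  let ev : φ.range →+* MvPolynomial (Fin 3) k :=
    (Polynomial.evalRingHom (0 : MvPolynomial (Fin 3) k)).comp φ.range.subtype
  have hev : Function.Surjective ev := by
    intro b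
    induction b using MvPolynomial.induction_on with
    | C c => exact ⟨φ.rangeRestrict (C c), by simp [ev, pC]⟩
    | add p q hp hq =>
      obtain ⟨a, rfl⟩ := hp
      obtain ⟨b, rfl⟩ := hq
      exact ⟨a + b, map_add _ _ _⟩
    | mul_X p i hp =>
      obtain ⟨a, rfl⟩ := hp
      have : ∃ c, ev c = X i := by
        fin_cases i
        · exact ⟨φ.rangeRestrict (X 0), by simp [ev, p0]⟩
        · exact ⟨φ.rangeRestrict (X 1), by simp [ev, p1]⟩
        · exact ⟨φ.rangeRestrict (X 2), by simp [ev, p2]⟩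
      obtain ⟨c, hc⟩ := this
      exact ⟨a * c, by rw [map_mul, hc]⟩
  have hne : φ.rangeRestrict (X 3) ≠ 0 := by
    intro h
    have h' := congrArg Subtype.val h
    simp [p3] at h'
  have hd := ringKrullDim_succ_le_of_surjective ev hev (mem_nonZeroDivisors_of_ne_zero hne)
    (by simp [ev, p3])
  have h4 : ringKrullDim (MvPolynomial (Fin 3) k) + 1 = 4 := by
    simp
    norm_num
  rw [h4] at hd
  refine hd.trans ?_
  refine ringKrullDim_le_of_surjective (Ideal.Quotient.lift _ φ.rangeRestrict ?_)
    (Ideal.Quotient.lift_surjective_of_surjective _ _ φ.rangeRestrict_surjective)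
  suffices h : Ideal.span _ ≤ RingHom.ker φ.rangeRestrict from fun a ha => h ha
  rw [Ideal.span_le]
  rintro a (rfl | rfl | rfl) <;>
  · simp only [SetLike.mem_coe, RingHom.mem_ker]
    apply Subtype.ext
    rw [RingHom.coe_rangeRestrict, ZeroMemClass.coe_zero]
    simp only [map_sub, map_mul, p0, p1, p2, p3, p4, p5]
    ring

/-- `k[x₁,x₂,x₃,y₁,y₂,y₃]/(x₁y₂-x₂y₁, x₂y₃-x₃y₂, x₃y₁-x₁y₃)` has Krull dimension 4.
Variables `0,1,2` are `x₁,x₂,x₃` and `3,4,5` are `y₁,y₂,y₃`. -/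
theorem minors_ring_dimension_four {k : Type*} [Field k] :
    ringKrullDim (MvPolynomial (Fin 6) k ⧸
      Ideal.span ({X 0 * X 4 - X 1 * X 3,
                   X 1 * X 5 - X 2 * X 4,
                   X 2 * X 3 - X 0 * X 5} : Set (MvPolynomial (Fin 6) k))) = 4 := by
  refine le_antisymm ?_ four_le_minors_dim
  refine minors_dim_le (Ideal.Quotient.mk _) Ideal.Quotient.mk_surjective ?_ ?_
  · rw [← map_mul, ← map_mul, Ideal.Quotient.eq]
    exact Ideal.subset_span (by simp)
  · rw [← map_mul, ← map_mul, Ideal.Quotient.eq]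
    exact Ideal.subset_span (by simp)
end

section
/- The ring $R = k[x_1,x_2,x_3,y_1,y_2,y_3]/(x_1y_2-x_2y_1,\; x_2y_3-x_3y_2,\; x_3y_1-x_1y_3)$ is Cohen-Macaulay. -/
open MvPolynomial

/-- A Noetherian local ring is Cohen-Macaulay if it admits a regular sequence in the
maximal ideal whose length equals the Krull dimension (depth = dimension). -/
def IsCohenMacaulayLocalRing (R : Type*) [CommRing R] [IsLocalRing R] : Prop :=
  IsNoetherianRing R ∧ ∃ rs : List R, (∀ r ∈ rs, r ∈ IsLocalRing.maximalIdeal R) ∧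
    RingTheory.Sequence.IsRegular R rs ∧ ringKrullDim R = rs.length

/-- A Noetherian ring is Cohen-Macaulay if all its localizations at primes are
Cohen-Macaulay local rings. -/
def IsCohenMacaulayRing (R : Type*) [CommRing R] : Prop :=
  IsNoetherianRing R ∧ ∀ P : Ideal R, ∀ _ : P.IsPrime,
    IsCohenMacaulayLocalRing (Localization.AtPrime P)

section Helpers

open IsLocalRing RingTheory.Sequence
open scoped Pointwise
universe u v

theorem spanFinrank_quot_lt {S : Type*} [CommRing S] [IsLocalRing S] [IsNoetherianRing S]
    (x : S) (hx : x ∈ maximalIdeal S) (hx2 : x ∉ maximalIdeal S ^ 2)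
    [IsLocalRing (S ⧸ Ideal.span {x})] :
    (maximalIdeal (S ⧸ Ideal.span {x})).spanFinrank + 1 ≤ (maximalIdeal S).spanFinrank := by
  classical
  obtain ⟨s, hcard, hs⟩ :=
    Submodule.FG.exists_span_finset_card_eq_spanFinrank
      (maximalIdeal S).fg_of_isNoetherianRing
  have hx' := hx
  rw [← hs, Submodule.mem_span_finset] at hx'
  obtain ⟨a, -, ha⟩ := hx'
  have : ∃ i ∈ s, a i ∉ maximalIdeal S := by
    by_contra! h
    apply hx2
    rw [← ha, pow_two]
    refine Ideal.sum_mem _ fun i hi => ?_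
    refine Ideal.mul_mem_mul (h i hi) ?_
    rw [← hs]
    exact Submodule.subset_span hi
  obtain ⟨i, hi, hai⟩ := this
  have hu : IsUnit (a i) := by simpa using hai
  let f := Ideal.Quotient.mk (Ideal.span {x})
  have hf : Function.Surjective f := Ideal.Quotient.mk_surjective
  have hmap : maximalIdeal (S ⧸ Ideal.span {x}) = Ideal.span (f '' (s.erase i : Finset S)) := by
    have h1 : maximalIdeal (S ⧸ Ideal.span {x}) = (maximalIdeal S).map f := by
      have hl : IsLocalHom f := IsLocalHom.of_surjective f hf
      symm
      have : ((maximalIdeal S).map f).IsMaximal := by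
        refine (Ideal.map_eq_top_or_isMaximal_of_surjective f hf
          (maximalIdeal.isMaximal S)).resolve_left ?_
        intro h
        have h3 : (maximalIdeal S).map f ≤ maximalIdeal _ := by
          rw [Ideal.map_le_iff_le_comap]
          intro y hy
          exact map_nonunit f y hy
        rw [h] at h3
        exact (maximalIdeal.isMaximal (S ⧸ Ideal.span {x})).ne_top (top_le_iff.mp h3)
      exact IsLocalRing.eq_maximalIdeal this
    rw [h1, ← hs]
    change Ideal.map f (Ideal.span (s : Set S)) = _
    rw [Ideal.map_span]
    apply le_antisymm
    · rw [Ideal.span_le]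
      rintro _ ⟨y, hy, rfl⟩
      by_cases hyi : y = i
      · subst hyi
        have h0 : f x = 0 := Ideal.Quotient.eq_zero_iff_mem.mpr (Ideal.mem_span_singleton_self x)
        have h0 : f (∑ j ∈ s, a j • j) = 0 := (congrArg f ha).trans h0
        rw [← Finset.add_sum_erase _ _ hi, map_add] at h0
        have h4 : f (a y) * f y = - f (∑ j ∈ s.erase y, a j • j) := by
          rw [← map_mul]; exact eq_neg_of_add_eq_zero_left h0
        have h5 : f (a y) * f y ∈ Ideal.span (f '' (s.erase y : Finset S)) := by
          rw [h4, map_sum]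
          refine neg_mem (Ideal.sum_mem _ fun j hj => ?_)
          rw [smul_eq_mul, map_mul]
          exact Ideal.mul_mem_left _ _ (Ideal.subset_span ⟨j, hj, rfl⟩)
        exact (Ideal.unit_mul_mem_iff_mem _ (hu.map f)).mp h5
      · exact Ideal.subset_span ⟨y, by simpa [hyi] using hy, rfl⟩
    · exact Ideal.span_mono (Set.image_mono (by simp))
  rw [hmap, ← hcard]
  have h6 := Submodule.spanFinrank_span_le_ncard_of_finite (R := S ⧸ Ideal.span {x})
    ((s.erase i).finite_toSet.image f)
  have h7 := Set.ncard_image_le (f := f) (s.erase i).finite_toSet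
  rw [Set.ncard_coe_finset, Finset.card_erase_of_mem hi] at h7
  have : 0 < s.card := Finset.card_pos.mpr ⟨i, hi⟩
  change (Submodule.span _ _).spanFinrank + 1 ≤ _
  omega

theorem regularLocal_aux (d : ℕ) : ∀ (S : Type u) [CommRing S] [IsRegularLocalRing S],
    (maximalIdeal S).spanFinrank = d → IsDomain S ∧ ∃ rs : List S, rs.length = d ∧
      (∀ r ∈ rs, r ∈ maximalIdeal S) ∧ IsWeaklyRegular S rs := by
  induction d with
  | zero =>
    intro S _ _ h
    rw [Submodule.spanFinrank_eq_zero_iff_eq_bot (maximalIdeal S).fg_of_isNoetherianRing] at h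
    have : IsField S := IsLocalRing.isField_iff_maximalIdeal_eq.mpr h
    exact ⟨this.isDomain, [], by simp⟩
  | succ d ih =>
    intro S _ _ h
    have hdim : ringKrullDim S = (d + 1 : ℕ) := by
      rw [← h, IsRegularLocalRing.spanFinrank_maximalIdeal]
    have hfg := (maximalIdeal S).fg_of_isNoetherianRing
    have hne : maximalIdeal S ≠ ⊥ := by
      intro hb
      rw [hb, Submodule.spanFinrank_bot] at h
      omega
    have hsq : ¬ maximalIdeal S ≤ maximalIdeal S ^ 2 := by
      intro hle
      apply hne
      refine Submodule.eq_bot_of_le_smul_of_le_jacobson_bot (maximalIdeal S) _ hfg ?_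
        (IsLocalRing.maximalIdeal_le_jacobson _)
      rwa [smul_eq_mul, ← pow_two]
    obtain ⟨x, hxm, hx⟩ : ∃ x ∈ maximalIdeal S, x ∉ maximalIdeal S ^ 2 ∧
        ∀ q ∈ minimalPrimes S, x ∉ q := by
      by_contra! hcon
      have := (Ideal.subset_union_prime_finite
        ((minimalPrimes.finite_of_isNoetherianRing S).insert (maximalIdeal S ^ 2)) (f := id)
        (maximalIdeal S ^ 2) (maximalIdeal S ^ 2) (I := maximalIdeal S) (by
          intro i hi hi1 _
          exact (Set.mem_of_mem_insert_of_ne hi hi1).1.1)).mp (by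
          intro y hy
          by_cases hy2 : y ∈ maximalIdeal S ^ 2
          · exact Set.mem_biUnion (Set.mem_insert _ _) hy2
          · obtain ⟨q, hq, hyq⟩ := hcon y hy hy2
            exact Set.mem_biUnion (Set.mem_insert_of_mem _ hq) hyq)
      obtain ⟨i, hi, hle⟩ := this
      rcases hi with rfl | hi
      · exact hsq hle
      · have hp : i.IsPrime := hi.1.1
        have : i = maximalIdeal S := le_antisymm (le_maximalIdeal hp.ne_top) hle
        rw [this, ← Ideal.height_eq_zero_iff] at hi
        have h2 := IsLocalRing.maximalIdeal_height_eq_ringKrullDim (R := S)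
        rw [hi, hdim] at h2
        norm_cast at h2
    obtain ⟨hx2, hxq⟩ := hx
    have hnt : Nontrivial (S ⧸ Ideal.span {x}) := by
      rw [Ideal.Quotient.nontrivial_iff]
      intro ht
      exact (maximalIdeal.isMaximal S).ne_top (top_le_iff.mp
        (ht ▸ (Ideal.span_singleton_le_iff_mem _).mpr hxm))
    have hloc : IsLocalRing (S ⧸ Ideal.span {x}) :=
      IsLocalRing.of_surjective' _ Ideal.Quotient.mk_surjective
    have hlt := spanFinrank_quot_lt x hxm hx2
    have hle : ringKrullDim S ≤ ringKrullDim (S ⧸ Ideal.span {x}) + 1 := by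
      have := Ideal.height_le_ringKrullDim_quotient_add_one hxm
      rwa [IsLocalRing.maximalIdeal_height_eq_ringKrullDim] at this
    have hd' := ringKrullDim_le_spanFinrank_maximalIdeal (S ⧸ Ideal.span {x})
    have hge : ((d : ℕ) : WithBot ℕ∞) ≤ ringKrullDim (S ⧸ Ideal.span {x}) := by
      rw [hdim] at hle
      push_cast at hle
      exact (ENat.WithBot.add_le_add_one_right_iff).mp hle
    have hfr : (maximalIdeal (S ⧸ Ideal.span {x})).spanFinrank = d := by
      have h8 := hge.trans hd'
      have h9 : d ≤ (maximalIdeal (S ⧸ Ideal.span {x})).spanFinrank := by exact_mod_cast h8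
      omega
    have hreg : IsRegularLocalRing (S ⧸ Ideal.span {x}) := by
      apply IsRegularLocalRing.of_spanFinrank_maximalIdeal_le
      rw [hfr]; exact hge
    obtain ⟨hdom, rs', hlen, hmem, hw⟩ := ih (S ⧸ Ideal.span {x}) hfr
    have hdomS : IsDomain S := by
      have hpr : (Ideal.span {x}).IsPrime := (Ideal.Quotient.isDomain_iff_prime _).mp hdom
      obtain ⟨q, hq, hqx⟩ := Ideal.exists_minimalPrimes_le (bot_le (a := Ideal.span {x}))
      have hqp : q.IsPrime := hq.1.1
      have hxq' : x ∉ q := hxq q hq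
      have hq0 : q = ⊥ := by
        refine Submodule.eq_bot_of_le_smul_of_le_jacobson_bot (maximalIdeal S) q
          q.fg_of_isNoetherianRing ?_ (IsLocalRing.maximalIdeal_le_jacobson _)
        intro y hy
        obtain ⟨z, rfl⟩ := Ideal.mem_span_singleton'.mp (hqx hy)
        have hz : z ∈ q := (hqp.mem_or_mem hy).resolve_right hxq'
        rw [mul_comm]
        exact Submodule.smul_mem_smul hxm hz
      rw [hq0] at hqp
      exact IsDomain.of_bot_isPrime S
    have hx0 : x ≠ 0 := by
      rintro rfl
      exact hx2 (Ideal.zero_mem _)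
    refine ⟨hdomS, ?_⟩
    obtain ⟨rs, rfl⟩ : ∃ rs : List S, rs.map (algebraMap S (S ⧸ Ideal.span {x})) = rs' := by
      have := List.map_surjective_iff.mpr
        (Ideal.Quotient.mk_surjective (I := Ideal.span {x})) 
      exact this rs'
    refine ⟨x :: rs, by simpa using hlen, ?_, ?_⟩
    · intro r hr
      rcases List.mem_cons.mp hr with rfl | hr
      · exact hxm
      · have h1 := hmem _ (List.mem_map_of_mem hr)
        by_contra hru
        have hru' : IsUnit r := by simpa using hru
        exact h1 (hru'.map _)
    · rw [isWeaklyRegular_cons_iff]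
      refine ⟨fun a b hab => mul_left_cancel₀ hx0 (by simpa using hab), ?_⟩
      rw [isWeaklyRegular_map_algebraMap_iff] at hw
      have he : x • (⊤ : Submodule S S) = Ideal.span {x} := by
        simp [← Submodule.ideal_span_singleton_smul]
      exact ((Submodule.quotEquivOfEq _ _ he).isWeaklyRegular_congr rs).mpr hw

theorem height_fiber_le {A : Type u} {R : Type v} [CommRing A] [CommRing R] [Algebra A R]
    [Module.Finite A R] (P : Ideal R) [P.IsPrime] :
    (P.map (Ideal.Quotient.mk ((P.under A).map (algebraMap A R)))).height = 0 := by
  have hle : (P.under A).map (algebraMap A R) ≤ P := Ideal.map_comap_le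
  have hmin := Ideal.IsIntegral.mem_minimalPrimes_map_under (R := A) P
  set J := (P.under A).map (algebraMap A R) with hJ
  have hs : Function.Surjective (Ideal.Quotient.mk J) := Ideal.Quotient.mk_surjective
  have hpr : (P.map (Ideal.Quotient.mk J)).IsPrime :=
    Ideal.map_isPrime_of_surjective hs (by simpa using hle)
  rw [Ideal.height_eq_zero_iff]
  refine ⟨⟨hpr, bot_le⟩, fun Q hQ hQP => ?_⟩
  have hQp : Q.IsPrime := hQ.1
  have h1 : Q.comap (Ideal.Quotient.mk J) ≤ P := by
    have := Ideal.comap_mono (f := Ideal.Quotient.mk J) hQP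
    rwa [Ideal.comap_map_of_surjective _ hs, ← RingHom.ker_eq_comap_bot, Ideal.mk_ker,
      sup_eq_left.mpr hle] at this
  have h2 : J ≤ Q.comap (Ideal.Quotient.mk J) := by
    have := Ideal.comap_mono (f := Ideal.Quotient.mk J) (bot_le (a := Q))
    rwa [← RingHom.ker_eq_comap_bot, Ideal.mk_ker] at this
  have h3 := hmin.2 ⟨Ideal.comap_isPrime _ Q, h2⟩ h1
  exact Ideal.map_le_iff_le_comap.mpr h3

theorem cohenMacaulay_of_finite_flat {A : Type u} {R : Type v} [CommRing A] [CommRing R]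
    [Algebra A R] [IsRegularRing A] [Module.Finite A R] [Module.Flat A R] :
    IsCohenMacaulayRing R := by
  have hN : IsNoetherianRing R := IsNoetherianRing.of_finite A R
  refine ⟨hN, fun P hP => ?_⟩
  refine ⟨IsLocalization.isNoetherianRing P.primeCompl _ hN, ?_⟩
  let := Localization.AtPrime.algebraOfLiesOver (P.under A) P
  have hloc : IsLocalHom
      (algebraMap (Localization.AtPrime <| P.under A) (Localization.AtPrime P)) := by
    rw [RingHom.algebraMap_toAlgebra]
    exact Localization.isLocalHom_localRingHom (P.under A) P (algebraMap A R) Ideal.LiesOver.over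
  have hflat : Module.Flat (Localization.AtPrime (P.under A)) (Localization.AtPrime P) :=
    inferInstance
  obtain ⟨-, rs, hlen, hmem, hw⟩ := regularLocal_aux _ (Localization.AtPrime (P.under A)) rfl
  have hmem' : ∀ r ∈ rs.map (algebraMap _ (Localization.AtPrime P)),
      r ∈ maximalIdeal (Localization.AtPrime P) := by
    intro r hr
    obtain ⟨s, hs, rfl⟩ := List.mem_map.mp hr
    exact map_nonunit _ s (hmem s hs)
  refine ⟨rs.map (algebraMap _ (Localization.AtPrime P)), hmem',
    IsRegular.of_isWeaklyRegular_of_mem_maximalIdeal _ hmem' hw.of_flat, ?_⟩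
  rw [List.length_map, hlen, IsRegularLocalRing.spanFinrank_maximalIdeal,
    IsLocalization.AtPrime.ringKrullDim_eq_height P (Localization.AtPrime P),
    IsLocalization.AtPrime.ringKrullDim_eq_height (P.under A) (Localization.AtPrime (P.under A)),
    Ideal.height_eq_height_add_of_liesOver_of_hasGoingDown (P.under A) P, height_fiber_le, add_zero]

theorem cohenMacaulay_of_basis {A : Type u} {R : Type v} [CommRing A] [CommRing R]
    [IsRegularRing A] (φ : A →+* R) (s t : R)
    (hf : Function.Bijective fun x : Fin 3 → A => φ (x 0) + φ (x 1) * s + φ (x 2) * t) :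
    IsCohenMacaulayRing R := by
  let := φ.toAlgebra
  let f : (Fin 3 → A) →ₗ[A] R :=
    { toFun := fun x => φ (x 0) + φ (x 1) * s + φ (x 2) * t
      map_add' := fun x y => by simp; ring
      map_smul' := fun t x => by
        simp [Algebra.smul_def, RingHom.algebraMap_toAlgebra]
        ring }
  let e := LinearEquiv.ofBijective f hf
  have : Module.Finite A R := Module.Finite.equiv e
  have : Module.Free A R := Module.Free.of_equiv e
  exact cohenMacaulay_of_finite_flat (A := A)

noncomputable section

/-- The free rank-three algebra `B ⊕ B u ⊕ B v` with `u² = a v - b u`, `u v = a d - c u`,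
`v² = d b + d u - c v`, parametrized by `a b c d : B`. -/
@[ext]
structure SegreAlg {B : Type u} (a b c d : B) where
  /-- coefficient of `1` -/
  p : B
  /-- coefficient of `u` -/
  q : B
  /-- coefficient of `v` -/
  r : B

namespace SegreAlg

variable {B : Type u} [CommRing B] {a b c d : B}

instance : Zero (SegreAlg a b c d) := ⟨⟨0, 0, 0⟩⟩
instance : One (SegreAlg a b c d) := ⟨⟨1, 0, 0⟩⟩
instance : Add (SegreAlg a b c d) := ⟨fun x y => ⟨x.p + y.p, x.q + y.q, x.r + y.r⟩⟩
instance : Neg (SegreAlg a b c d) := ⟨fun x => ⟨-x.p, -x.q, -x.r⟩⟩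
instance : Mul (SegreAlg a b c d) := ⟨fun x y =>
  ⟨x.p * y.p + (x.q * y.r + x.r * y.q) * (a * d) + x.r * y.r * (d * b),
   x.p * y.q + x.q * y.p - x.q * y.q * b - (x.q * y.r + x.r * y.q) * c + x.r * y.r * d,
   x.p * y.r + x.r * y.p + x.q * y.q * a - x.r * y.r * c⟩⟩

@[simp] theorem zero_p : (0 : SegreAlg a b c d).p = 0 := rfl
@[simp] theorem zero_q : (0 : SegreAlg a b c d).q = 0 := rfl
@[simp] theorem zero_r : (0 : SegreAlg a b c d).r = 0 := rfl
@[simp] theorem one_p : (1 : SegreAlg a b c d).p = 1 := rfl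
@[simp] theorem one_q : (1 : SegreAlg a b c d).q = 0 := rfl
@[simp] theorem one_r : (1 : SegreAlg a b c d).r = 0 := rfl
@[simp] theorem add_p (x y : SegreAlg a b c d) : (x + y).p = x.p + y.p := rfl
@[simp] theorem add_q (x y : SegreAlg a b c d) : (x + y).q = x.q + y.q := rfl
@[simp] theorem add_r (x y : SegreAlg a b c d) : (x + y).r = x.r + y.r := rfl
@[simp] theorem neg_p (x : SegreAlg a b c d) : (-x).p = -x.p := rfl
@[simp] theorem neg_q (x : SegreAlg a b c d) : (-x).q = -x.q := rfl
@[simp] theorem neg_r (x : SegreAlg a b c d) : (-x).r = -x.r := rfl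
@[simp] theorem mul_p (x y : SegreAlg a b c d) : (x * y).p =
  x.p * y.p + (x.q * y.r + x.r * y.q) * (a * d) + x.r * y.r * (d * b) := rfl
@[simp] theorem mul_q (x y : SegreAlg a b c d) : (x * y).q =
  x.p * y.q + x.q * y.p - x.q * y.q * b - (x.q * y.r + x.r * y.q) * c + x.r * y.r * d := rfl
@[simp] theorem mul_r (x y : SegreAlg a b c d) : (x * y).r =
  x.p * y.r + x.r * y.p + x.q * y.q * a - x.r * y.r * c := rfl

instance : CommRing (SegreAlg a b c d) where
  add_assoc _ _ _ := by ext <;> simp <;> ring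
  zero_add _ := by ext <;> simp
  add_zero _ := by ext <;> simp
  add_comm _ _ := by ext <;> simp <;> ring
  neg_add_cancel _ := by ext <;> simp
  nsmul := nsmulRec
  zsmul := zsmulRec
  mul_assoc _ _ _ := by ext <;> simp <;> ring
  one_mul _ := by ext <;> simp
  mul_one _ := by ext <;> simp
  zero_mul _ := by ext <;> simp
  mul_zero _ := by ext <;> simp
  left_distrib _ _ _ := by ext <;> simp <;> ring
  right_distrib _ _ _ := by ext <;> simp <;> ring
  mul_comm _ _ := by ext <;> simp <;> ring

@[simp] theorem sub_p (x y : SegreAlg a b c d) : (x - y).p = x.p - y.p := by simp [sub_eq_add_neg]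
@[simp] theorem sub_q (x y : SegreAlg a b c d) : (x - y).q = x.q - y.q := by simp [sub_eq_add_neg]
@[simp] theorem sub_r (x y : SegreAlg a b c d) : (x - y).r = x.r - y.r := by simp [sub_eq_add_neg]

/-- The structure map. -/
def ofBase (a b c d : B) : B →+* SegreAlg a b c d where
  toFun x := ⟨x, 0, 0⟩
  map_zero' := rfl
  map_one' := rfl
  map_add' _ _ := by ext <;> simp
  map_mul' _ _ := by ext <;> simp

end SegreAlg

section Main

variable (k : Type u) [Field k]

/-- The ideal of minors. -/
abbrev minorsIdeal : Ideal (MvPolynomial (Fin 6) k) :=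
  Ideal.span ({X 0 * X 4 - X 1 * X 3, X 1 * X 5 - X 2 * X 4, X 2 * X 3 - X 0 * X 5} :
    Set (MvPolynomial (Fin 6) k))

/-- The ring in question. -/
abbrev MinorsRing : Type u := MvPolynomial (Fin 6) k ⧸ minorsIdeal k

/-- The Noether normalization. -/
abbrev BaseRing : Type u := MvPolynomial (Fin 4) k

/-- The cubic extension of the Noether normalization. -/
abbrev CubicRing : Type u :=
  SegreAlg (X 0 : BaseRing k) (X 1) (X 2) (X 3)

/-- Variables in the quotient ring. -/
def mvar (i : Fin 6) : MinorsRing k := Ideal.Quotient.mk _ (X i)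

theorem mvar_rel1 : mvar k 0 * mvar k 4 = mvar k 1 * mvar k 3 := by
  rw [← sub_eq_zero]
  simp only [mvar, ← map_mul, ← map_sub]
  exact Ideal.Quotient.eq_zero_iff_mem.mpr (Ideal.subset_span (by simp))

theorem mvar_rel2 : mvar k 1 * mvar k 5 = mvar k 2 * mvar k 4 := by
  rw [← sub_eq_zero]
  simp only [mvar, ← map_mul, ← map_sub]
  exact Ideal.Quotient.eq_zero_iff_mem.mpr (Ideal.subset_span (by simp))

theorem mvar_rel3 : mvar k 2 * mvar k 3 = mvar k 0 * mvar k 5 := by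
  rw [← sub_eq_zero]
  simp only [mvar, ← map_mul, ← map_sub]
  exact Ideal.Quotient.eq_zero_iff_mem.mpr (Ideal.subset_span (by simp))

/-- Noether normalization map. -/
def noether : BaseRing k →+* MinorsRing k :=
  (aeval (R := k) ![mvar k 0, mvar k 1 - mvar k 3, mvar k 2 - mvar k 4, mvar k 5]).toRingHom

@[simp] theorem noether_0 : noether k (X 0) = mvar k 0 := by simp [noether]
@[simp] theorem noether_1 : noether k (X 1) = mvar k 1 - mvar k 3 := by simp [noether]
@[simp] theorem noether_2 : noether k (X 2) = mvar k 2 - mvar k 4 := by simp [noether]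
@[simp] theorem noether_3 : noether k (X 3) = mvar k 5 := by simp [noether]
@[simp] theorem noether_C (t : k) : noether k (C t) = Ideal.Quotient.mk _ (C t) := by
  simp only [noether, AlgHom.toRingHom_eq_coe, RingHom.coe_coe, algHom_C]
  rfl

/-- The images of the six variables in the cubic ring. -/
def cubicVar : Fin 6 → CubicRing k :=
  ![⟨X 0, 0, 0⟩, ⟨X 1, 1, 0⟩, ⟨X 2, 0, 1⟩, ⟨0, 1, 0⟩, ⟨0, 0, 1⟩, ⟨X 3, 0, 0⟩]

/-- The map from the polynomial ring to the cubic ring. -/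
def polyToCubic : MvPolynomial (Fin 6) k →+* CubicRing k :=
  eval₂Hom ((SegreAlg.ofBase _ _ _ _).comp C) (cubicVar k)

/-- The map from the quotient ring to the cubic ring. -/
def toCubic : MinorsRing k →+* CubicRing k :=
  Ideal.Quotient.lift _ (polyToCubic k) (by
    intro x hx
    rw [← RingHom.mem_ker]
    revert x
    change minorsIdeal k ≤ _
    rw [Ideal.span_le]
    rintro _ (rfl | rfl | rfl) <;> rw [SetLike.mem_coe, RingHom.mem_ker] <;>
      ext1 <;> simp [polyToCubic, cubicVar] <;> ring)

theorem toCubic_mvar (i : Fin 6) : toCubic k (mvar k i) = cubicVar k i := by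
  simp [toCubic, mvar, polyToCubic]

/-- The map back. -/
def ofCubic : CubicRing k →+* MinorsRing k where
  toFun x := noether k x.p + noether k x.q * mvar k 3 + noether k x.r * mvar k 4
  map_zero' := by simp
  map_one' := by simp
  map_add' x y := by simp; ring
  map_mul' x y := by
    have h1 := mvar_rel1 k
    have h2 := mvar_rel2 k
    have h3 := mvar_rel3 k
    simp only [SegreAlg.mul_p, SegreAlg.mul_q, SegreAlg.mul_r, map_add, map_mul, map_sub, noether_0,
      noether_1, noether_2, noether_3]
    generalize noether k x.p = p
    generalize noether k x.q = q
    generalize noether k x.r = r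
    generalize noether k y.p = p'
    generalize noether k y.q = q'
    generalize noether k y.r = r'
    linear_combination (q * q') * h1 + (r * r') * h2 - (q * r' + r * q') * h3

theorem toCubic_noether (x : BaseRing k) : toCubic k (noether k x) = SegreAlg.ofBase _ _ _ _ x := by
  have : (toCubic k).comp (noether k) = SegreAlg.ofBase _ _ _ _ := by
    apply MvPolynomial.ringHom_ext
    · intro t
      simp [toCubic, polyToCubic]
    · intro i
      fin_cases i <;> ext1 <;> simp [toCubic_mvar, cubicVar, SegreAlg.ofBase]
  exact congrArg (fun f => f x) this

theorem toCubic_ofCubic (x : CubicRing k) : toCubic k (ofCubic k x) = x := by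
  change toCubic k (noether k x.p + noether k x.q * mvar k 3 + noether k x.r * mvar k 4) = x
  simp only [map_add, map_mul, toCubic_noether, toCubic_mvar]
  ext1 <;> simp [cubicVar, SegreAlg.ofBase]

theorem ofCubic_surjective : Function.Surjective (ofCubic k) := by
  have : (ofCubic k).comp (polyToCubic k) = Ideal.Quotient.mk _ := by
    apply MvPolynomial.ringHom_ext
    · intro t
      simp [polyToCubic, ofCubic, SegreAlg.ofBase]
    · intro i
      change _ = mvar k i
      fin_cases i <;> simp [polyToCubic, ofCubic, cubicVar]
  intro y
  obtain ⟨x, rfl⟩ := Ideal.Quotient.mk_surjective y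
  exact ⟨polyToCubic k x, congrArg (fun f => f x) this⟩

theorem minorsRing_cm : IsCohenMacaulayRing (MinorsRing k) := by
  refine cohenMacaulay_of_basis (noether k) (mvar k 3) (mvar k 4) ⟨?_, ?_⟩
  · intro x y h
    have h1 := congrArg (toCubic k)
      (show ofCubic k ⟨x 0, x 1, x 2⟩ = ofCubic k ⟨y 0, y 1, y 2⟩ from h)
    rw [toCubic_ofCubic, toCubic_ofCubic, SegreAlg.mk.injEq] at h1
    funext i
    fin_cases i
    exacts [h1.1, h1.2.1, h1.2.2]
  · intro y
    obtain ⟨x, rfl⟩ := ofCubic_surjective k y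
    exact ⟨![x.p, x.q, x.r], rfl⟩

end Main

end

end Helpers

/-- The ring `k[x₁,x₂,x₃,y₁,y₂,y₃]/(x₁y₂-x₂y₁, x₂y₃-x₃y₂, x₃y₁-x₁y₃)` is Cohen-Macaulay.
Variables `0,1,2` are `x₁,x₂,x₃` and `3,4,5` are `y₁,y₂,y₃`. -/
theorem minors_ring_cohenMacaulay {k : Type*} [Field k] :
    IsCohenMacaulayRing (MvPolynomial (Fin 6) k ⧸
      Ideal.span ({X 0 * X 4 - X 1 * X 3,
                   X 1 * X 5 - X 2 * X 4,
                   X 2 * X 3 - X 0 * X 5} : Set (MvPolynomial (Fin 6) k))) := by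
  exact minorsRing_cm k
end

section
/- The scheme $Flag_{x,y,x}^\circ$ for $S=\mathbb{A}^2$, i.e. the subscheme of affine 12-space cut out by $X_{11}=X_{33}$, $Y_{11}=Y_{33}$, $X_{12}(Y_{11}-Y_{22}) = Y_{12}(X_{11}-X_{22})$, $X_{23}(Y_{22}-Y_{11}) = Y_{23}(X_{22}-X_{11})$, and $X_{12}Y_{23} = X_{23}Y_{12}$, is isomorphic to $\mathbb{A}^4 \times \mathrm{Spec}\, k[x_1,x_2,x_3,y_1,y_2,y_3]/(x_1y_2-x_2y_1, x_2y_3-x_3y_2, x_3y_1-x_1y_3)$, and in particular has dimension 8. -/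
open MvPolynomial

namespace FlagXYX

/-- The ideal of `Flag_{x,y,x}` in affine 12-space. -/
noncomputable abbrev I12 (k : Type*) [Field k] : Ideal (MvPolynomial (Fin 12) k) :=
  Ideal.span ({X 0 - X 5,
               X 6 - X 11,
               X 1 * (X 6 - X 9) - X 7 * (X 0 - X 3),
               X 4 * (X 9 - X 6) - X 10 * (X 3 - X 0),
               X 1 * X 10 - X 4 * X 7} : Set (MvPolynomial (Fin 12) k))

/-- The ideal of `2 × 2` minors. -/
noncomputable abbrev I6 (k : Type*) [Field k] : Ideal (MvPolynomial (Fin 6) k) :=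
  Ideal.span ({X 0 * X 4 - X 1 * X 3,
               X 1 * X 5 - X 2 * X 4,
               X 2 * X 3 - X 0 * X 5} : Set (MvPolynomial (Fin 6) k))

/-- The determinantal ring. -/
abbrev R6 (k : Type*) [Field k] := MvPolynomial (Fin 6) k ⧸ I6 k

/-- The coordinate ring of the flag scheme. -/
abbrev R12 (k : Type*) [Field k] := MvPolynomial (Fin 12) k ⧸ I12 k

/-- Coordinates on the determinantal ring. -/
noncomputable def v6 (k : Type*) [Field k] (i : Fin 6) : R6 k := Ideal.Quotient.mk (I6 k) (X i)

/-- Coordinates on the flag scheme. -/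
noncomputable def v12 (k : Type*) [Field k] (i : Fin 12) : R12 k :=
  Ideal.Quotient.mk (I12 k) (X i)

section
variable {k : Type*} [Field k]

lemma v6_rel0 : v6 k 0 * v6 k 4 - v6 k 1 * v6 k 3 = 0 := by
  have : Ideal.Quotient.mk (I6 k) (X 0 * X 4 - X 1 * X 3) = 0 :=
    Ideal.Quotient.eq_zero_iff_mem.2 (Ideal.subset_span (by simp))
  simp only [map_sub, map_mul] at this
  exact this

lemma v6_rel1 : v6 k 1 * v6 k 5 - v6 k 2 * v6 k 4 = 0 := by
  have : Ideal.Quotient.mk (I6 k) (X 1 * X 5 - X 2 * X 4) = 0 :=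
    Ideal.Quotient.eq_zero_iff_mem.2 (Ideal.subset_span (by simp))
  simp only [map_sub, map_mul] at this
  exact this

lemma v6_rel2 : v6 k 2 * v6 k 3 - v6 k 0 * v6 k 5 = 0 := by
  have : Ideal.Quotient.mk (I6 k) (X 2 * X 3 - X 0 * X 5) = 0 :=
    Ideal.Quotient.eq_zero_iff_mem.2 (Ideal.subset_span (by simp))
  simp only [map_sub, map_mul] at this
  exact this

lemma v12_rel0 : v12 k 0 - v12 k 5 = 0 := by
  have : Ideal.Quotient.mk (I12 k) (X 0 - X 5) = 0 :=
    Ideal.Quotient.eq_zero_iff_mem.2 (Ideal.subset_span (by simp))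
  simp only [map_sub, map_mul] at this
  exact this

lemma v12_rel1 : v12 k 6 - v12 k 11 = 0 := by
  have : Ideal.Quotient.mk (I12 k) (X 6 - X 11) = 0 :=
    Ideal.Quotient.eq_zero_iff_mem.2 (Ideal.subset_span (by simp))
  simp only [map_sub, map_mul] at this
  exact this

lemma v12_rel2 : v12 k 1 * (v12 k 6 - v12 k 9) - v12 k 7 * (v12 k 0 - v12 k 3) = 0 := by
  have : Ideal.Quotient.mk (I12 k) (X 1 * (X 6 - X 9) - X 7 * (X 0 - X 3)) = 0 :=
    Ideal.Quotient.eq_zero_iff_mem.2 (Ideal.subset_span (by simp))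
  simp only [map_sub, map_mul] at this
  exact this

lemma v12_rel3 : v12 k 4 * (v12 k 9 - v12 k 6) - v12 k 10 * (v12 k 3 - v12 k 0) = 0 := by
  have : Ideal.Quotient.mk (I12 k) (X 4 * (X 9 - X 6) - X 10 * (X 3 - X 0)) = 0 :=
    Ideal.Quotient.eq_zero_iff_mem.2 (Ideal.subset_span (by simp))
  simp only [map_sub, map_mul] at this
  exact this

lemma v12_rel4 : v12 k 1 * v12 k 10 - v12 k 4 * v12 k 7 = 0 := by
  have : Ideal.Quotient.mk (I12 k) (X 1 * X 10 - X 4 * X 7) = 0 :=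
    Ideal.Quotient.eq_zero_iff_mem.2 (Ideal.subset_span (by simp))
  simp only [map_sub, map_mul] at this
  exact this

/-- Universal property of the determinantal ring. -/
noncomputable def lift6 {A : Type*} [CommRing A] [Algebra k A] (a : Fin 6 → A)
    (h0 : a 0 * a 4 - a 1 * a 3 = 0) (h1 : a 1 * a 5 - a 2 * a 4 = 0)
    (h2 : a 2 * a 3 - a 0 * a 5 = 0) : R6 k →ₐ[k] A :=
  Ideal.Quotient.liftₐ (I6 k) (aeval a) (by
    intro p hp
    have : I6 k ≤ RingHom.ker (aeval a : MvPolynomial (Fin 6) k →ₐ[k] A) := by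
      refine Ideal.span_le.2 ?_
      rintro p (rfl | rfl | rfl) <;> simpa using by assumption
    exact this hp)

lemma lift6_v6 {A : Type*} [CommRing A] [Algebra k A] (a : Fin 6 → A) (h0 h1 h2) (i : Fin 6) :
    lift6 (k := k) a h0 h1 h2 (v6 k i) = a i := by
  exact aeval_X a i

/-- Universal property of the flag scheme. -/
noncomputable def lift12 {A : Type*} [CommRing A] [Algebra k A] (a : Fin 12 → A)
    (h0 : a 0 - a 5 = 0) (h1 : a 6 - a 11 = 0)
    (h2 : a 1 * (a 6 - a 9) - a 7 * (a 0 - a 3) = 0)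
    (h3 : a 4 * (a 9 - a 6) - a 10 * (a 3 - a 0) = 0)
    (h4 : a 1 * a 10 - a 4 * a 7 = 0) : R12 k →ₐ[k] A :=
  Ideal.Quotient.liftₐ (I12 k) (aeval a) (by
    intro p hp
    have : I12 k ≤ RingHom.ker (aeval a : MvPolynomial (Fin 12) k →ₐ[k] A) := by
      refine Ideal.span_le.2 ?_
      rintro p (rfl | rfl | rfl | rfl | rfl) <;> simpa using by assumption
    exact this hp)

lemma lift12_v12 {A : Type*} [CommRing A] [Algebra k A] (a : Fin 12 → A) (h0 h1 h2 h3 h4)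
    (i : Fin 12) : lift12 (k := k) a h0 h1 h2 h3 h4 (v12 k i) = a i := by
  exact aeval_X a i

lemma hom6_ext {A : Type*} [CommRing A] [Algebra k A] {f g : R6 k →ₐ[k] A}
    (h : ∀ i, f (v6 k i) = g (v6 k i)) : f = g :=
  Ideal.Quotient.algHom_ext _ (MvPolynomial.algHom_ext h)

lemma hom12_ext {A : Type*} [CommRing A] [Algebra k A] {f g : R12 k →ₐ[k] A}
    (h : ∀ i, f (v12 k i) = g (v12 k i)) : f = g :=
  Ideal.Quotient.algHom_ext _ (MvPolynomial.algHom_ext h)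

/-- The forward map. -/
noncomputable def fwd : R12 k →ₐ[k] MvPolynomial (Fin 4) (R6 k) :=
  lift12 ![X 0, C (v6 k 0), X 1, X 0 - C (v6 k 1), C (v6 k 2), X 0,
      X 2, C (v6 k 3), X 3, X 2 - C (v6 k 4), C (v6 k 5), X 2]
    (by simp) (by simp)
    (by
      have := congrArg (C (σ := Fin 4)) (v6_rel0 (k := k))
      simp only [map_sub, map_mul, map_zero] at this
      simp only [Fin.isValue, Matrix.cons_val]
      linear_combination this)
    (by
      have := congrArg (C (σ := Fin 4)) (v6_rel1 (k := k))
      simp only [map_sub, map_mul, map_zero] at this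
      simp only [Fin.isValue, Matrix.cons_val]
      linear_combination this)
    (by
      have := congrArg (C (σ := Fin 4)) (v6_rel2 (k := k))
      simp only [map_sub, map_mul, map_zero] at this
      simp only [Fin.isValue, Matrix.cons_val]
      linear_combination -this)

/-- The backward map on the determinantal ring. -/
noncomputable def bwd6 : R6 k →ₐ[k] R12 k :=
  lift6 ![v12 k 1, v12 k 0 - v12 k 3, v12 k 4, v12 k 7, v12 k 6 - v12 k 9, v12 k 10]
    (by
      simp only [Fin.isValue, Matrix.cons_val]
      linear_combination v12_rel2 (k := k))
    (by
      simp only [Fin.isValue, Matrix.cons_val]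
      linear_combination v12_rel3 (k := k))
    (by
      simp only [Fin.isValue, Matrix.cons_val]
      linear_combination -v12_rel4 (k := k))

/-- The backward map. -/
noncomputable def bwd : MvPolynomial (Fin 4) (R6 k) →ₐ[k] R12 k :=
  aevalTower bwd6 ![v12 k 0, v12 k 2, v12 k 6, v12 k 8]

/-- The isomorphism. -/
noncomputable def iso : R12 k ≃ₐ[k] MvPolynomial (Fin 4) (R6 k) :=
  AlgEquiv.ofAlgHom fwd bwd
    (by
      apply MvPolynomial.algHom_ext'
      · refine hom6_ext (k := k) (A := MvPolynomial (Fin 4) (R6 k)) ?_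
        intro i
        have h : ∀ x : R6 k, algebraMap (R6 k) (MvPolynomial (Fin 4) (R6 k)) x = C x :=
          fun _ => rfl
        fin_cases i <;> simp [h, bwd, bwd6, fwd, lift6_v6, lift12_v12]
        · exact sub_sub_cancel (X 0 : MvPolynomial (Fin 4) (R6 k)) (C (v6 k 1))
        · exact sub_sub_cancel (X 2 : MvPolynomial (Fin 4) (R6 k)) (C (v6 k 4))
      · intro i
        fin_cases i <;> simp [bwd, fwd, lift12_v12])
    (by
      apply hom12_ext
      intro i
      have h0 := sub_eq_zero.1 (v12_rel0 (k := k))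
      have h1 := sub_eq_zero.1 (v12_rel1 (k := k))
      fin_cases i <;> simp [bwd, bwd6, fwd, lift6_v6, lift12_v12, ← h0, ← h1])

lemma dim_le_of_integral (A B : Type*) [CommRing A] [CommRing B] [Algebra A B]
    [Algebra.IsIntegral A B] : ringKrullDim B ≤ ringKrullDim A := by
  refine Order.krullDim_le_of_strictMono (PrimeSpectrum.comap (algebraMap A B)) ?_
  intro p q h
  exact Ideal.IsIntegral.comap_lt_comap (R := A) (I := p.asIdeal) (J := q.asIdeal) h

lemma isIntegral_of_cubic {A B : Type*} [CommRing A] [CommRing B] [Algebra A B] (r : B)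
    (a b c : A) (h : r ^ 3 + algebraMap A B a * r ^ 2 + algebraMap A B b * r
      + algebraMap A B c = 0) : IsIntegral A r := by
  refine ⟨Polynomial.X ^ 3 + Polynomial.C a * Polynomial.X ^ 2 + Polynomial.C b * Polynomial.X
    + Polynomial.C c, by monicity!, ?_⟩
  simpa using h

lemma dim_le_four : ringKrullDim (R6 k) ≤ 4 := by
  let φ : MvPolynomial (Fin 4) k →ₐ[k] R6 k :=
    aeval ![v6 k 0, v6 k 1 + v6 k 3, v6 k 2 + v6 k 4, v6 k 5]
  let _ : Algebra (MvPolynomial (Fin 4) k) (R6 k) := φ.toRingHom.toAlgebra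
  have hφ : ∀ a, algebraMap (MvPolynomial (Fin 4) k) (R6 k) a = φ a := fun _ => rfl
  have e0 : φ (X 0) = v6 k 0 := by simp [φ]
  have e1 : φ (X 1) = v6 k 1 + v6 k 3 := by simp [φ]
  have e2 : φ (X 2) = v6 k 2 + v6 k 4 := by simp [φ]
  have e3 : φ (X 3) = v6 k 5 := by simp [φ]
  have r0 := v6_rel0 (k := k)
  have r1 := v6_rel1 (k := k)
  have r2 := v6_rel2 (k := k)
  have i0 : IsIntegral (MvPolynomial (Fin 4) k) (v6 k 0) := by
    rw [← e0, ← hφ]; exact isIntegral_algebraMap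
  have i5 : IsIntegral (MvPolynomial (Fin 4) k) (v6 k 5) := by
    rw [← e3, ← hφ]; exact isIntegral_algebraMap
  have i1 : IsIntegral (MvPolynomial (Fin 4) k) (v6 k 1) := by
    refine isIntegral_of_cubic _ (-2 * X 1) (X 1 ^ 2 + X 0 * X 2)
      (-X 0 * X 1 * X 2 + X 0 ^ 2 * X 3) ?_
    simp only [hφ, map_add, map_mul, map_neg, map_pow, e0, e1, e2, e3, map_ofNat]
    linear_combination -v6 k 3 * r0 - v6 k 0 * r2
  have i2 : IsIntegral (MvPolynomial (Fin 4) k) (v6 k 2) := by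
    refine isIntegral_of_cubic _ (-X 2) (X 3 * X 1) (-X 0 * X 3 ^ 2) ?_
    simp only [hφ, map_add, map_mul, map_neg, map_pow, e0, e1, e2, e3, map_ofNat]
    linear_combination v6 k 2 * r1 + v6 k 5 * r2
  have i3 : IsIntegral (MvPolynomial (Fin 4) k) (v6 k 3) := by
    have : v6 k 3 = algebraMap (MvPolynomial (Fin 4) k) (R6 k) (X 1) - v6 k 1 := by
      rw [hφ, e1]; ring
    rw [this]; exact isIntegral_algebraMap.sub i1
  have i4 : IsIntegral (MvPolynomial (Fin 4) k) (v6 k 4) := by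
    have : v6 k 4 = algebraMap (MvPolynomial (Fin 4) k) (R6 k) (X 2) - v6 k 2 := by
      rw [hφ, e2]; ring
    rw [this]; exact isIntegral_algebraMap.sub i2
  have : Algebra.IsIntegral (MvPolynomial (Fin 4) k) (R6 k) := by
    constructor
    intro x
    obtain ⟨p, rfl⟩ := Ideal.Quotient.mk_surjective x
    induction p using MvPolynomial.induction_on with
    | C a =>
      have : Ideal.Quotient.mk (I6 k) (C a)
          = algebraMap (MvPolynomial (Fin 4) k) (R6 k) (C a) := by
        rw [hφ, ← MvPolynomial.algebraMap_eq, ← MvPolynomial.algebraMap_eq, AlgHom.commutes]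
        rfl
      rw [this]; exact isIntegral_algebraMap
    | add p q hp hq => rw [map_add]; exact hp.add hq
    | mul_X p i hp =>
      rw [map_mul]
      refine hp.mul ?_
      change IsIntegral _ (v6 k i)
      fin_cases i <;> assumption
  refine (dim_le_of_integral (MvPolynomial (Fin 4) k) (R6 k)).trans ?_
  simp

lemma four_le_dim : 4 ≤ ringKrullDim (R6 k) := by
  -- `x_i ↦ s a_i`, `y_i ↦ t a_i`, with `s = X 3`, `t = X 4`
  let ψ : R6 k →ₐ[k] MvPolynomial (Fin 5) k :=
    lift6 ![X 3 * X 0, X 3 * X 1, X 3 * X 2, X 4 * X 0, X 4 * X 1, X 4 * X 2]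
      (by simp only [Fin.isValue, Matrix.cons_val]; ring)
      (by simp only [Fin.isValue, Matrix.cons_val]; ring)
      (by simp only [Fin.isValue, Matrix.cons_val]; ring)
  let θ : MvPolynomial (Fin 5) k →ₐ[k] MvPolynomial (Fin 3) k :=
    aeval ![X 0, X 1, X 2, 1, 0]
  let χ : ψ.range →ₐ[k] MvPolynomial (Fin 3) k := θ.comp ψ.range.val
  have hχ : Function.Surjective χ := by
    let σ : MvPolynomial (Fin 3) k →ₐ[k] R6 k := aeval ![v6 k 0, v6 k 1, v6 k 2]
    have : (χ.comp ψ.rangeRestrict).comp σ = AlgHom.id k _ := by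
      apply MvPolynomial.algHom_ext
      intro i
      fin_cases i <;> simp [χ, σ, ψ, θ, lift6_v6]
    intro y
    exact ⟨ψ.rangeRestrict (σ y), DFunLike.congr_fun this y⟩
  let y : ψ.range := ψ.rangeRestrict (v6 k 3)
  have hy : y ∈ nonZeroDivisors ψ.range := by
    apply mem_nonZeroDivisors_of_ne_zero
    intro h
    have : (y : MvPolynomial (Fin 5) k) = 0 := by rw [h]; rfl
    simp [y, ψ, lift6_v6] at this
  have h1 := ringKrullDim_succ_le_of_surjective χ.toRingHom hχ hy
    (by simp [y, χ, ψ, θ, lift6_v6])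
  have h2 := ringKrullDim_le_of_surjective ψ.rangeRestrict.toRingHom ψ.rangeRestrict_surjective
  refine le_trans (le_of_eq ?_) (h1.trans h2)
  simp
  norm_num

lemma dim_R6 : ringKrullDim (R6 k) = 4 := le_antisymm dim_le_four four_le_dim

lemma dim_R12 : ringKrullDim (R12 k) = 8 := by
  rw [ringKrullDim_eq_of_ringEquiv (iso (k := k)).toRingEquiv,
    MvPolynomial.ringKrullDim_of_isNoetherianRing, dim_R6]
  simp
  norm_num

end

end FlagXYX

/-- The scheme `Flag_{x,y,x}` for `S = 𝔸²` is isomorphic to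
`𝔸⁴ × Spec k[x₁,x₂,x₃,y₁,y₂,y₃]/(x₁y₂-x₂y₁, x₂y₃-x₃y₂, x₃y₁-x₁y₃)` and has dimension 8.
Variables of `Fin 12`: `0,…,5` are `X₁₁,X₁₂,X₁₃,X₂₂,X₂₃,X₃₃` and `6,…,11` are
`Y₁₁,Y₁₂,Y₁₃,Y₂₂,Y₂₃,Y₃₃`.  Variables of `Fin 6`: `0,1,2` are `x₁,x₂,x₃` and `3,4,5`
are `y₁,y₂,y₃`. -/
theorem flag_xyx_iso_and_dimension_eight {k : Type*} [Field k] :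
    Nonempty ((MvPolynomial (Fin 12) k ⧸
        Ideal.span ({X 0 - X 5,
                     X 6 - X 11,
                     X 1 * (X 6 - X 9) - X 7 * (X 0 - X 3),
                     X 4 * (X 9 - X 6) - X 10 * (X 3 - X 0),
                     X 1 * X 10 - X 4 * X 7} : Set (MvPolynomial (Fin 12) k))) ≃ₐ[k]
      MvPolynomial (Fin 4) (MvPolynomial (Fin 6) k ⧸
        Ideal.span ({X 0 * X 4 - X 1 * X 3,
                     X 1 * X 5 - X 2 * X 4,
                     X 2 * X 3 - X 0 * X 5} : Set (MvPolynomial (Fin 6) k)))) ∧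
    ringKrullDim (MvPolynomial (Fin 12) k ⧸
        Ideal.span ({X 0 - X 5,
                     X 6 - X 11,
                     X 1 * (X 6 - X 9) - X 7 * (X 0 - X 3),
                     X 4 * (X 9 - X 6) - X 10 * (X 3 - X 0),
                     X 1 * X 10 - X 4 * X 7} : Set (MvPolynomial (Fin 12) k))) = 8 := by
  exact ⟨⟨FlagXYX.iso⟩, FlagXYX.dim_R12⟩
end
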